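/- Let L, L′ ∈ ℝ^{m₂×d}, and let P, P′ be symmetric positive definite matrices satisfying the inner Riccati equation for L and L′ respectively. Let c > 0 be such that ‖P′ − P‖ ≤ c·‖L′ − L‖, and suppose ‖L′ − L‖ ≤ (c·‖Ã_L − B·K_P(L)‖ + ‖P‖·‖C‖)/(c·‖C‖). Then ‖K_{P′}(L′) − K_P(L)‖ ≤ (2‖B‖·(c·‖Ã_L − B·K_P(L)‖ + ‖P‖·‖C‖)/λ_min(Rᵘ))·‖L′ − L‖. -/

import Mathlib

/-!
Put `G = Rᵘ + BᵀP'B`, `K = K_P(L)`, `K' = K_{P'}(L')`. By definition `G K' = BᵀP'Ã_{L'}`, while the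
normal equation for `K` reads `Rᵘ K = BᵀP (Ã_L - B K)`. Subtracting `G K` gives the exact identity
`G (K' - K) = Bᵀ ((P' - P)(Ã_L - B K) - P' C (L' - L))` (`KP_sub_identity`).

Since `BᵀP'B` is positive semidefinite, the quadratic form of `G` dominates `λ_min(Rᵘ) ‖·‖²`, whence
`λ_min(Rᵘ) ‖X‖ ≤ ‖G X‖` for every `X` (`lamMin_mul_specNorm_le`). Bounding the right-hand side of
the identity with `‖P'‖ ≤ ‖P‖ + c ‖L' - L‖` leaves the term `c ‖C‖ ‖L' - L‖`, which the smallness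
hypothesis on `‖L' - L‖` absorbs into `c ‖Ã_L - B K‖ + ‖P‖ ‖C‖`; this is the origin of the
factor `2`. -/

open Matrix

noncomputable section

/-- Spectral radius of a real square matrix: the spectral radius of its complexification. -/
def specRad {n : ℕ} (M : Matrix (Fin n) (Fin n) ℝ) : ENNReal :=
  spectralRadius ℂ (M.map (algebraMap ℝ ℂ))

/-- Spectral (operator 2-) norm of a real matrix. -/
def specNorm {m n : ℕ} (M : Matrix (Fin m) (Fin n) ℝ) : ℝ :=
  ‖LinearMap.toContinuousLinearMap (Matrix.toEuclideanLin M)‖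

/-- Smallest (real) eigenvalue of a matrix, as the infimum of its real spectrum. -/
def lamMin {n : ℕ} (M : Matrix (Fin n) (Fin n) ℝ) : ℝ :=
  sInf (spectrum ℝ M)

/-- The data of a zero-sum LQ game. -/
structure LQ (d m₁ m₂ : ℕ) where
  A : Matrix (Fin d) (Fin d) ℝ
  B : Matrix (Fin d) (Fin m₁) ℝ
  C : Matrix (Fin d) (Fin m₂) ℝ
  Q : Matrix (Fin d) (Fin d) ℝ
  Ru : Matrix (Fin m₁) (Fin m₁) ℝ
  Rv : Matrix (Fin m₂) (Fin m₂) ℝ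
  hQ : Q.PosDef
  hRu : Ru.PosDef
  hRv : Rv.PosDef

namespace LQ

variable {d m₁ m₂ : ℕ} (S : LQ d m₁ m₂)

/-- Closed-loop matrix `A - B*K - C*L`. -/
def cl (K : Matrix (Fin m₁) (Fin d) ℝ) (L : Matrix (Fin m₂) (Fin d) ℝ) :
    Matrix (Fin d) (Fin d) ℝ :=
  S.A - S.B * K - S.C * L

/-- A pair `(K, L)` is stabilizing if `ρ(A - BK - CL) < 1`. -/
def IsStabilizing (K : Matrix (Fin m₁) (Fin d) ℝ) (L : Matrix (Fin m₂) (Fin d) ℝ) : Prop :=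
  specRad (S.cl K L) < 1

/-- `P_{K,L} = Σ_{t≥0} ((A-BK-CL)ᵀ)ᵗ (Q + KᵀRᵘK - LᵀRᵛL) (A-BK-CL)ᵗ`. -/
def P (K : Matrix (Fin m₁) (Fin d) ℝ) (L : Matrix (Fin m₂) (Fin d) ℝ) :
    Matrix (Fin d) (Fin d) ℝ :=
  ∑' t : ℕ, ((S.cl K L)ᵀ) ^ t * (S.Q + Kᵀ * S.Ru * K - Lᵀ * S.Rv * L) * (S.cl K L) ^ t

/-- `Σ_{K,L} = Σ_{t≥0} (A-BK-CL)ᵗ Sig0 ((A-BK-CL)ᵀ)ᵗ`. -/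
def Sig (Sig0 : Matrix (Fin d) (Fin d) ℝ) (K : Matrix (Fin m₁) (Fin d) ℝ)
    (L : Matrix (Fin m₂) (Fin d) ℝ) : Matrix (Fin d) (Fin d) ℝ :=
  ∑' t : ℕ, (S.cl K L) ^ t * Sig0 * ((S.cl K L)ᵀ) ^ t

/-- The cost `C(K,L) = tr(Sig0 P_{K,L})`. -/
def cost (Sig0 : Matrix (Fin d) (Fin d) ℝ) (K : Matrix (Fin m₁) (Fin d) ℝ)
    (L : Matrix (Fin m₂) (Fin d) ℝ) : ℝ :=
  (Sig0 * S.P K L).trace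

/-- `E_{K,L} = (Rᵘ + Bᵀ P_{K,L} B) K - Bᵀ P_{K,L} (A - CL)`. -/
def E (K : Matrix (Fin m₁) (Fin d) ℝ) (L : Matrix (Fin m₂) (Fin d) ℝ) :
    Matrix (Fin m₁) (Fin d) ℝ :=
  (S.Ru + (S.B)ᵀ * S.P K L * S.B) * K - (S.B)ᵀ * S.P K L * (S.A - S.C * L)

/-- `F_{K,L} = (-Rᵛ + Cᵀ P_{K,L} C) L - Cᵀ P_{K,L} (A - BK)`. -/
def F (K : Matrix (Fin m₁) (Fin d) ℝ) (L : Matrix (Fin m₂) (Fin d) ℝ) :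
    Matrix (Fin m₂) (Fin d) ℝ :=
  (-S.Rv + (S.C)ᵀ * S.P K L * S.C) * L - (S.C)ᵀ * S.P K L * (S.A - S.B * K)

/-- The value function `V_{K,L}(x) = xᵀ P_{K,L} x`. -/
def V (K : Matrix (Fin m₁) (Fin d) ℝ) (L : Matrix (Fin m₂) (Fin d) ℝ) (x : Fin d → ℝ) : ℝ :=
  x ⬝ᵥ (S.P K L *ᵥ x)

/-- The advantage function `A_{K,L}(x,u,v)`. -/
def Adv (K : Matrix (Fin m₁) (Fin d) ℝ) (L : Matrix (Fin m₂) (Fin d) ℝ)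
    (x : Fin d → ℝ) (u : Fin m₁ → ℝ) (v : Fin m₂ → ℝ) : ℝ :=
  x ⬝ᵥ (S.Q *ᵥ x) + u ⬝ᵥ (S.Ru *ᵥ u) - v ⬝ᵥ (S.Rv *ᵥ v)
    + (S.A *ᵥ x + S.B *ᵥ u + S.C *ᵥ v) ⬝ᵥ (S.P K L *ᵥ (S.A *ᵥ x + S.B *ᵥ u + S.C *ᵥ v))
    - x ⬝ᵥ (S.P K L *ᵥ x)

/-- `Ã_L = A - CL`. -/
def At (L : Matrix (Fin m₂) (Fin d) ℝ) : Matrix (Fin d) (Fin d) ℝ := S.A - S.C * L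

/-- `P` satisfies the inner Riccati equation for `L`. -/
def Riccati (L : Matrix (Fin m₂) (Fin d) ℝ) (P : Matrix (Fin d) (Fin d) ℝ) : Prop :=
  P = (S.Q - Lᵀ * S.Rv * L) + (S.At L)ᵀ * P * S.At L
      - (S.At L)ᵀ * P * S.B * (S.Ru + (S.B)ᵀ * P * S.B)⁻¹ * (S.B)ᵀ * P * S.At L

/-- `K_P(L) = (Rᵘ + BᵀPB)⁻¹ BᵀP Ã_L`. -/
def KP (L : Matrix (Fin m₂) (Fin d) ℝ) (P : Matrix (Fin d) (Fin d) ℝ) :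
    Matrix (Fin m₁) (Fin d) ℝ :=
  (S.Ru + (S.B)ᵀ * P * S.B)⁻¹ * (S.B)ᵀ * P * S.At L

/-- `F_P(L) = (-Rᵛ + CᵀPC) L - CᵀP (A - B K_P(L))`. -/
def FP (L : Matrix (Fin m₂) (Fin d) ℝ) (P : Matrix (Fin d) (Fin d) ℝ) :
    Matrix (Fin m₂) (Fin d) ℝ :=
  (-S.Rv + (S.C)ᵀ * P * S.C) * L - (S.C)ᵀ * P * (S.A - S.B * S.KP L P)

/-- `W_P(L) = Rᵛ - Cᵀ[P - PB(Rᵘ + BᵀPB)⁻¹BᵀP]C`. -/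
def WP (L : Matrix (Fin m₂) (Fin d) ℝ) (P : Matrix (Fin d) (Fin d) ℝ) :
    Matrix (Fin m₂) (Fin m₂) ℝ :=
  S.Rv - (S.C)ᵀ * (P - P * S.B * (S.Ru + (S.B)ᵀ * P * S.B)⁻¹ * (S.B)ᵀ * P) * S.C

end LQ

/-! ### Spectral norm -/

section Norms

open scoped Matrix.Norms.L2Operator

lemma specNorm_eq_norm {m n : ℕ} (M : Matrix (Fin m) (Fin n) ℝ) : specNorm M = ‖M‖ := rfl

lemma specNorm_nonneg {m n : ℕ} (M : Matrix (Fin m) (Fin n) ℝ) : 0 ≤ specNorm M :=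
  norm_nonneg _

lemma specNorm_mul_le {l m n : ℕ} (M : Matrix (Fin l) (Fin m) ℝ) (N : Matrix (Fin m) (Fin n) ℝ) :
    specNorm (M * N) ≤ specNorm M * specNorm N :=
  Matrix.l2_opNorm_mul M N

lemma specNorm_add_le {m n : ℕ} (M N : Matrix (Fin m) (Fin n) ℝ) :
    specNorm (M + N) ≤ specNorm M + specNorm N :=
  norm_add_le M N

lemma specNorm_sub_le {m n : ℕ} (M N : Matrix (Fin m) (Fin n) ℝ) :
    specNorm (M - N) ≤ specNorm M + specNorm N :=
  norm_sub_le M N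

lemma specNorm_transpose {m n : ℕ} (M : Matrix (Fin m) (Fin n) ℝ) :
    specNorm Mᵀ = specNorm M := by
  rw [← Matrix.conjTranspose_eq_transpose_of_trivial]
  exact Matrix.l2_opNorm_conjTranspose M

lemma specNorm_eq_zero {m n : ℕ} {M : Matrix (Fin m) (Fin n) ℝ} : specNorm M = 0 ↔ M = 0 := by
  rw [specNorm_eq_norm, norm_eq_zero]

end Norms

/-! ### Smallest eigenvalue and coercivity -/

lemma lamMin_pos {n : ℕ} [Nonempty (Fin n)] {R : Matrix (Fin n) (Fin n) ℝ} (hR : R.PosDef) :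
    0 < lamMin R := by
  have hrange := hR.isHermitian.spectrum_real_eq_range_eigenvalues
  have hne : (spectrum ℝ R).Nonempty := hrange ▸ Set.range_nonempty _
  have hmem : lamMin R ∈ spectrum ℝ R := hne.csInf_mem R.finite_real_spectrum
  rw [hrange] at hmem
  obtain ⟨i, hi⟩ := hmem
  exact hi ▸ hR.eigenvalues_pos i

/-- The Rayleigh-quotient bound `λ_min(R) ‖x‖² ≤ xᵀRx`: the spectrum of `R - λ_min(R) I` is the
spectrum of `R` shifted to the nonnegative half-line. -/
lemma lamMin_mul_dotProduct_le {n : ℕ} {R : Matrix (Fin n) (Fin n) ℝ} (hR : R.IsHermitian)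
    (x : Fin n → ℝ) : lamMin R * (x ⬝ᵥ x) ≤ x ⬝ᵥ (R *ᵥ x) := by
  have hpsd : (R - algebraMap ℝ _ (lamMin R)).PosSemidef := by
    rw [Matrix.posSemidef_iff_isHermitian_and_spectrum_nonneg]
    refine ⟨hR.sub ?_, ?_⟩
    · simp [Matrix.IsHermitian, Matrix.algebraMap_eq_diagonal]
    · rw [← spectrum.sub_singleton_eq]
      rintro _ ⟨a, ha, _, rfl, rfl⟩
      exact sub_nonneg.2 (csInf_le R.finite_real_spectrum.bddBelow ha)
  have h := hpsd.dotProduct_mulVec_nonneg x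
  simp only [star_trivial, Matrix.sub_mulVec, dotProduct_sub, Algebra.algebraMap_eq_smul_one,
    Matrix.smul_mulVec, Matrix.one_mulVec, dotProduct_smul, smul_eq_mul] at h
  linarith

/-- Coercivity: a matrix whose quadratic form dominates `a ‖·‖²` satisfies `a ‖y‖ ≤ ‖G y‖` by
Cauchy–Schwarz; applied to `y = X v`, this bounds the operator norm of `X`. -/
lemma mul_specNorm_le_of_coercive {n k : ℕ} {G : Matrix (Fin n) (Fin n) ℝ} {a : ℝ} (ha : 0 < a)
    (hG : ∀ x : Fin n → ℝ, a * (x ⬝ᵥ x) ≤ x ⬝ᵥ (G *ᵥ x)) (X : Matrix (Fin n) (Fin k) ℝ) :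
    a * specNorm X ≤ specNorm (G * X) := by
  have hvec (y : EuclideanSpace ℝ (Fin n)) : a * ‖y‖ ≤ ‖Matrix.toEuclideanLin G y‖ := by
    have hinner : inner ℝ (Matrix.toEuclideanLin G y) y = y.ofLp ⬝ᵥ (G *ᵥ y.ofLp) := by
      simp [EuclideanSpace.inner_eq_star_dotProduct]
    have hself : ‖y‖ ^ 2 = y.ofLp ⬝ᵥ y.ofLp := by
      rw [← real_inner_self_eq_norm_sq, EuclideanSpace.inner_eq_star_dotProduct, star_trivial]
    have hcs := real_inner_le_norm (Matrix.toEuclideanLin G y) y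
    have hy := hG y.ofLp
    rw [← hself, ← hinner] at hy
    rcases (norm_nonneg y).eq_or_lt with h0 | hpos
    · rw [← h0, mul_zero]; exact norm_nonneg _
    · refine le_of_mul_le_mul_right ?_ hpos
      nlinarith
  rw [mul_comm, ← le_div_iff₀ ha]
  refine ContinuousLinearMap.opNorm_le_bound _
    (div_nonneg (specNorm_nonneg _) ha.le) fun v => ?_
  rw [div_mul_eq_mul_div, le_div_iff₀ ha, mul_comm]
  refine (hvec _).trans ?_
  have hcomp : Matrix.toEuclideanLin G (Matrix.toEuclideanLin X v)
      = Matrix.toEuclideanLin (G * X) v := by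
    ext i
    simp [Matrix.mulVec_mulVec]
  have hop := (LinearMap.toContinuousLinearMap (Matrix.toEuclideanLin (G * X))).le_opNorm v
  simp only [LinearMap.coe_toContinuousLinearMap'] at hop ⊢
  rw [hcomp]
  exact hop

lemma posSemidef_transpose_mul_mul {m n : ℕ} {P : Matrix (Fin m) (Fin m) ℝ} (hP : P.PosDef)
    (B : Matrix (Fin m) (Fin n) ℝ) : (Bᵀ * P * B).PosSemidef := by
  simpa using hP.posSemidef.conjTranspose_mul_mul_same B

/-- `‖(R + BᵀPB)⁻¹‖ ≤ 1 / λ_min(R)`, in inverse-free form. -/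
lemma lamMin_mul_specNorm_le {m n k : ℕ} [Nonempty (Fin n)] {R : Matrix (Fin n) (Fin n) ℝ}
    {P : Matrix (Fin m) (Fin m) ℝ} (hR : R.PosDef) (hP : P.PosDef)
    (B : Matrix (Fin m) (Fin n) ℝ) (X : Matrix (Fin n) (Fin k) ℝ) :
    lamMin R * specNorm X ≤ specNorm ((R + Bᵀ * P * B) * X) := by
  refine mul_specNorm_le_of_coercive (lamMin_pos hR) (fun x => ?_) X
  have h := (posSemidef_transpose_mul_mul hP B).dotProduct_mulVec_nonneg x
  rw [star_trivial] at h
  rw [Matrix.add_mulVec, dotProduct_add]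
  linarith [lamMin_mul_dotProduct_le hR.isHermitian x]

/-! ### The perturbation identity -/

namespace LQ

variable {d m₁ m₂ : ℕ} (S : LQ d m₁ m₂)

/-- The normal equation characterising `K_P(L)`; positive definiteness of `P` makes the inverse in
the definition of `K_P(L)` a genuine one. -/
lemma mul_KP {P : Matrix (Fin d) (Fin d) ℝ} (hP : P.PosDef) (L : Matrix (Fin m₂) (Fin d) ℝ) :
    (S.Ru + (S.B)ᵀ * P * S.B) * S.KP L P = (S.B)ᵀ * P * S.At L := by
  have hG := (S.hRu.add_posSemidef (posSemidef_transpose_mul_mul hP S.B)).isUnit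
  rw [Matrix.isUnit_iff_isUnit_det] at hG
  rw [KP, ← Matrix.mul_assoc, ← Matrix.mul_assoc, ← Matrix.mul_assoc,
    Matrix.mul_nonsing_inv _ hG, Matrix.one_mul]

lemma KP_sub_identity {P P' : Matrix (Fin d) (Fin d) ℝ} (hP : P.PosDef) (hP' : P'.PosDef)
    (L L' : Matrix (Fin m₂) (Fin d) ℝ) :
    (S.Ru + (S.B)ᵀ * P' * S.B) * (S.KP L' P' - S.KP L P) =
      (S.B)ᵀ * ((P' - P) * (S.At L - S.B * S.KP L P) - P' * (S.C * (L' - L))) := by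
  have h := S.mul_KP hP L
  have hRu : S.Ru * S.KP L P = (S.B)ᵀ * P * S.At L - (S.B)ᵀ * P * S.B * S.KP L P := by
    rw [← h, Matrix.add_mul, add_sub_cancel_right]
  have hAt : S.At L' = S.At L - S.C * (L' - L) := by
    simp only [At, Matrix.mul_sub]; abel
  rw [Matrix.mul_sub, S.mul_KP hP' L', Matrix.add_mul, hRu, hAt]
  simp only [Matrix.mul_sub, Matrix.sub_mul, Matrix.mul_assoc]
  abel

end LQ

open LQ in
/-- Perturbation of `K_P(L)`: if `‖P' - P‖ ≤ c‖L' - L‖` and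
`‖L' - L‖ ≤ (c‖Ã_L - B K_P(L)‖ + ‖P‖‖C‖)/(c‖C‖)`, then
`‖K_{P'}(L') - K_P(L)‖ ≤ (2‖B‖(c‖Ã_L - B K_P(L)‖ + ‖P‖‖C‖)/λ_min(Rᵘ))·‖L' - L‖`
(all norms spectral). -/
theorem KP_perturbation {d m₁ m₂ : ℕ} (S : LQ d m₁ m₂)
    (L L' : Matrix (Fin m₂) (Fin d) ℝ) (P P' : Matrix (Fin d) (Fin d) ℝ)
    (hP : P.PosDef) (hP' : P'.PosDef)
    (hric : S.Riccati L P) (hric' : S.Riccati L' P')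
    (c : ℝ) (hc : 0 < c) (hPpert : specNorm (P' - P) ≤ c * specNorm (L' - L))
    (hLpert : specNorm (L' - L) ≤
      (c * specNorm (S.At L - S.B * S.KP L P) + specNorm P * specNorm S.C) /
        (c * specNorm S.C)) :
    specNorm (S.KP L' P' - S.KP L P) ≤
      2 * specNorm S.B * (c * specNorm (S.At L - S.B * S.KP L P)
          + specNorm P * specNorm S.C) / lamMin S.Ru * specNorm (L' - L) := by
  rcases isEmpty_or_nonempty (Fin m₁) with hm | hm
  -- With no controls the spectrum of `Rᵘ` is empty, so `lamMin` takes the junk value `sInf ∅ = 0`;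
  -- both sides of the inequality then vanish.
  · have hK : S.KP L' P' - S.KP L P = 0 := Subsingleton.elim _ _
    have hlam : lamMin S.Ru = 0 := by simp [lamMin]
    rw [specNorm_eq_zero.2 hK, hlam, div_zero, zero_mul]
  have hlam := lamMin_pos S.hRu
  set D := specNorm (L' - L) with hD
  set a := specNorm (S.At L - S.B * S.KP L P) with ha
  have hD0 : 0 ≤ D := specNorm_nonneg _
  have ha0 : 0 ≤ a := specNorm_nonneg _
  have hB0 := specNorm_nonneg S.B
  have hC0 := specNorm_nonneg S.C
  have hP0 := specNorm_nonneg P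
  have hM0 : 0 ≤ c * a + specNorm P * specNorm S.C := by positivity
  have habsorb : c * specNorm S.C * D ≤ c * a + specNorm P * specNorm S.C := by
    -- If `‖C‖ = 0`, the bound on `‖L' - L‖` divides by zero, but the claim is trivial.
    rcases hC0.eq_or_lt with h0 | hpos
    · rw [← h0] at hM0 ⊢
      simpa using hM0
    · rwa [le_div_iff₀ (by positivity), mul_comm] at hLpert
  have hP'le : specNorm P' ≤ specNorm P + c * D := by
    have h := specNorm_add_le P (P' - P)
    rw [add_sub_cancel] at h
    linarith
  have h1 : specNorm ((P' - P) * (S.At L - S.B * S.KP L P)) ≤ c * D * a :=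
    (specNorm_mul_le _ _).trans (mul_le_mul_of_nonneg_right hPpert ha0)
  have h2 : specNorm (P' * (S.C * (L' - L))) ≤ (specNorm P + c * D) * (specNorm S.C * D) :=
    (specNorm_mul_le _ _).trans
      (mul_le_mul hP'le (specNorm_mul_le _ _) (specNorm_nonneg _) (by positivity))
  have h3 : specNorm ((P' - P) * (S.At L - S.B * S.KP L P) - P' * (S.C * (L' - L))) ≤
      2 * (c * a + specNorm P * specNorm S.C) * D := by
    have h := mul_le_mul_of_nonneg_right habsorb hD0
    refine (specNorm_sub_le _ _).trans ((add_le_add h1 h2).trans ?_)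
    linarith
  have h4 := lamMin_mul_specNorm_le S.hRu hP' S.B (S.KP L' P' - S.KP L P)
  rw [S.KP_sub_identity hP hP' L L'] at h4
  have h5 := h4.trans (specNorm_mul_le _ _)
  rw [specNorm_transpose] at h5
  have h6 := h5.trans (mul_le_mul_of_nonneg_left h3 hB0)
  rw [div_mul_eq_mul_div, le_div_iff₀ hlam]
  linarith
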